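/- Let n ≥ 1, let S be a symmetric endomorphism of V with associated bilinear form s(X,Y) = g(S(X),Y), and set h = (1/n)·s − (tr(S)/(2n²))·g. Then every trace-free symmetric (0,2)-tensor T on V satisfies ⟨Ric_{h⧆g}(T), T⟩ = −⟨ST, T⟩. -/

import Mathlib

/-!
For `h(X,Y) = g(HX,Y)` the curvature operator of `h ⧆ g` is
`R(X,Y)Z = h(X,Z)Y - g(Y,Z)HX + g(X,Z)HY - h(Y,Z)X`. On a symmetric `T` both slots contribute
equally to `⟨Ric(T), T⟩`, and contracting one slot over an orthonormal basis gives

`⟨Ric_{h⧆g}(T), T⟩ = -n ⟨HT, T⟩ + 2 tr(H) |T|² - 4 tr(T) ∑ₐ T(eₐ, H eₐ)`.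

For trace-free `T` the last term vanishes. The normalization `H = S/n - (tr S / 2n²) id` is the one
for which the multiples of `|T|²` coming from `-n ⟨HT, T⟩` and from `2 tr(H) |T|²` cancel, leaving
`-⟨ST, T⟩`.
-/

open scoped RealInnerProductSpace BigOperators
open Finset

noncomputable section

variable {V : Type*} [NormedAddCommGroup V] [InnerProductSpace ℝ V]

/-- The action `(L T)(X₁,…,X_k) = −Σᵢ T(X₁,…,L(Xᵢ),…,X_k)` of a map `L : V → V`
on a `(0,k)`-tensor `T`. -/
def tact {k : ℕ} (L : V → V) (T : (Fin k → V) → ℝ) (X : Fin k → V) : ℝ :=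
  -∑ i, T (Function.update X i (L (X i)))

/-- The Kulkarni–Nomizu product of two bilinear forms. -/
def knProd (s₁ s₂ : V → V → ℝ) (X Y Z W : V) : ℝ :=
  s₁ X Z * s₂ Y W - s₁ X W * s₂ Y Z + s₁ Y W * s₂ X Z - s₁ Y Z * s₂ X W

/-- The inner product `g` as a bilinear form. -/
def gf (X Y : V) : ℝ := ⟪X, Y⟫

/-- The curvature endomorphism `R(X,Y)`, determined by `g(R(X,Y)Z,W) = R(X,Y,Z,W)`,
expressed via the orthonormal basis `e`. -/
def curvOp {n : ℕ} (e : Fin n → V) (R : V → V → V → V → ℝ) (X Y Z : V) : V :=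
  ∑ a, R X Y Z (e a) • e a

/-- The curvature term `Ric_R(T)(X₁,…,X_k) = Σᵢ Σⱼ ((R(Xᵢ,eⱼ))T)(X₁,…,eⱼ,…,X_k)`. -/
def ricTerm {n k : ℕ} (e : Fin n → V) (R : V → V → V → V → ℝ)
    (T : (Fin k → V) → ℝ) (X : Fin k → V) : ℝ :=
  ∑ i : Fin k, ∑ j : Fin n, tact (curvOp e R (X i) (e j)) T (Function.update X i (e j))

/-- The inner product of two `(0,k)`-tensors with respect to the orthonormal basis `e`. -/
def tinner {n k : ℕ} (e : Fin n → V) (S T : (Fin k → V) → ℝ) : ℝ :=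
  ∑ I : Fin k → Fin n, S (fun m => e (I m)) * T (fun m => e (I m))

/-- The skew endomorphism `(A ∧ B)Z = g(A,Z)B − g(B,Z)A`. -/
def wedgeOp (A B Z : V) : V := ⟪A, Z⟫ • B - ⟪B, Z⟫ • A

section Pair

variable {α : Type*}

theorem update_pair_zero (x y z : α) : Function.update ![x, y] 0 z = ![z, y] :=
  Fin.update_cons_zero (α := fun _ : Fin 2 => α) x ![y] z

theorem update_pair_one (x y z : α) : Function.update ![x, y] 1 z = ![x, z] := by
  ext i; fin_cases i <;> simp

theorem tact_pair (L : α → α) (T : (Fin 2 → α) → ℝ) (x y : α) :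
    tact L T ![x, y] = -(T ![L x, y] + T ![x, L y]) := by
  simp only [tact, Fin.sum_univ_two, Matrix.cons_val_zero, Matrix.cons_val_one,
    update_pair_zero, update_pair_one]

theorem tinner_eq_sum_pair {n : ℕ} (e : Fin n → α) (S T : (Fin 2 → α) → ℝ) :
    tinner e S T = ∑ a, ∑ b, S ![e a, e b] * T ![e a, e b] := by
  have comp_pair (a b : Fin n) : (fun m => e (![a, b] m)) = ![e a, e b] := by
    ext m; fin_cases m <;> rfl
  rw [tinner, ← (finTwoArrowEquiv (Fin n)).symm.sum_comp, Fintype.sum_prod_type]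
  simp only [finTwoArrowEquiv_symm_apply, comp_pair]

theorem tinner_eq_two_mul_sum_of_symm {n : ℕ} (e : Fin n → α) (S T : (Fin 2 → α) → ℝ)
    (F : α → α → ℝ) (hS : ∀ x y, S ![x, y] = F x y + F y x)
    (hT : ∀ x y, T ![x, y] = T ![y, x]) :
    tinner e S T = 2 * ∑ a, ∑ b, F (e a) (e b) * T ![e a, e b] := by
  have swap : ∑ a, ∑ b, F (e b) (e a) * T ![e a, e b] =
      ∑ a, ∑ b, F (e a) (e b) * T ![e a, e b] := by
    rw [Finset.sum_comm]
    exact Finset.sum_congr rfl fun a _ => Finset.sum_congr rfl fun b _ => by rw [hT]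
  simp only [tinner_eq_sum_pair, hS, add_mul, Finset.sum_add_distrib, swap, two_mul]

theorem tinner_tact_of_symm {n : ℕ} (e : Fin n → α) (L : α → α) (T : (Fin 2 → α) → ℝ)
    (hT : ∀ x y, T ![x, y] = T ![y, x]) :
    tinner e (tact L T) T = -2 * ∑ a, ∑ b, T ![L (e a), e b] * T ![e a, e b] := by
  rw [tinner_eq_two_mul_sum_of_symm e _ T (fun x y => -T ![L x, y])
    (fun x y => by rw [tact_pair, hT x (L y)]; ring) hT]
  simp only [neg_mul, Finset.sum_neg_distrib, mul_neg]

end Pair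

theorem tact_smul_sub_smul_id {M : Type*} [AddCommGroup M] [Module ℝ M] {k : ℕ} (c d : ℝ)
    (L : M →ₗ[ℝ] M) (T : MultilinearMap ℝ (fun _ : Fin k => M) ℝ) (X : Fin k → M) :
    tact (c • L - d • LinearMap.id : M →ₗ[ℝ] M) T X = c * tact L T X + k * d * T X := by
  simp only [tact, LinearMap.sub_apply, LinearMap.smul_apply, LinearMap.id_apply,
    T.map_update_sub, T.map_update_smul, Function.update_eq_self, smul_eq_mul,
    Finset.sum_sub_distrib, ← Finset.mul_sum, Finset.sum_const, Finset.card_univ,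
    Fintype.card_fin, nsmul_eq_mul]
  ring

theorem tinner_tact_smul_sub_smul_id {M : Type*} [AddCommGroup M] [Module ℝ M] {n k : ℕ}
    (e : Fin n → M) (c d : ℝ) (L : M →ₗ[ℝ] M) (T : MultilinearMap ℝ (fun _ : Fin k => M) ℝ)
    (U : (Fin k → M) → ℝ) :
    tinner e (tact (c • L - d • LinearMap.id : M →ₗ[ℝ] M) T) U =
      c * tinner e (tact L T) U + k * d * tinner e T U := by
  simp only [tinner, tact_smul_sub_smul_id, add_mul, mul_assoc, Finset.sum_add_distrib,
    Finset.mul_sum]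

/-- The bilinear form `(X, Y) ↦ T(X, Y)` of a `(0,2)`-tensor `T`, giving access to the library's
linearity lemmas in each slot. -/
def toBilinForm {M : Type*} [AddCommGroup M] [Module ℝ M]
    (T : MultilinearMap ℝ (fun _ : Fin 2 => M) ℝ) : LinearMap.BilinForm ℝ M :=
  LinearMap.mk₂ ℝ (fun X Y => T ![X, Y])
    (fun X X' Y => T.cons_add ![Y] X X') (fun c X Y => T.cons_smul ![Y] c X)
    (fun X Y Y' => (T.curryLeft X).cons_add ![] Y Y')
    (fun c X Y => (T.curryLeft X).cons_smul ![] c Y)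

theorem toBilinForm_apply {M : Type*} [AddCommGroup M] [Module ℝ M]
    (T : MultilinearMap ℝ (fun _ : Fin 2 => M) ℝ) (X Y : M) : toBilinForm T X Y = T ![X, Y] :=
  rfl

theorem sum_inner_smul_map {ι W : Type*} [Fintype ι] [AddCommGroup W] [Module ℝ W]
    (e : OrthonormalBasis ι ℝ V) (f : V →ₗ[ℝ] W) (X : V) :
    ∑ j, ⟪X, e j⟫ • f (e j) = f X := by
  simp only [real_inner_comm _ X, ← map_smul, ← map_sum, e.sum_repr']

theorem sum_inner_map_self_eq_trace {ι : Type*} [Fintype ι] (e : OrthonormalBasis ι ℝ V)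
    (L : V →ₗ[ℝ] V) :
    ∑ a, ⟪L (e a), e a⟫ = L.trace ℝ V := by
  simp only [L.trace_eq_sum_inner e, real_inner_comm (L _)]

/-- The contribution `Σⱼ ((R(X,eⱼ))T)(eⱼ,Y)` of the first slot of a `(0,2)`-tensor `T` to the
curvature term `Ric_R(T)(X,Y)`. -/
def ricSlot {n : ℕ} (e : Fin n → V) (R : V → V → V → V → ℝ) (T : (Fin 2 → V) → ℝ)
    (X Y : V) : ℝ :=
  ∑ j, tact (curvOp e R X (e j)) T ![e j, Y]

theorem ricTerm_pair_of_symm {n : ℕ} (e : Fin n → V) (R : V → V → V → V → ℝ)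
    (T : (Fin 2 → V) → ℝ) (hT : ∀ X Y, T ![X, Y] = T ![Y, X]) (X Y : V) :
    ricTerm e R T ![X, Y] = ricSlot e R T X Y + ricSlot e R T Y X := by
  have tact_symm (L : V → V) (Z W : V) : tact L T ![Z, W] = tact L T ![W, Z] := by
    rw [tact_pair, tact_pair, hT (L Z), hT Z, add_comm]
  simp only [ricTerm, ricSlot, Fin.sum_univ_two, Matrix.cons_val_zero, Matrix.cons_val_one,
    update_pair_zero, update_pair_one, tact_symm _ X]

section KulkarniNomizu

variable {n : ℕ} (e : OrthonormalBasis (Fin n) ℝ V)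

theorem curvOp_knProd (H : V → V) (X Y Z : V) :
    curvOp e (knProd (fun X Y => ⟪H X, Y⟫) gf) X Y Z =
      ⟪H X, Z⟫ • Y - ⟪Y, Z⟫ • H X + ⟪X, Z⟫ • H Y - ⟪H Y, Z⟫ • X := by
  rw [← e.sum_repr' (_ - _)]
  refine Finset.sum_congr rfl fun a _ => congrArg (· • e a) ?_
  simp only [knProd, gf, inner_add_right, inner_sub_right, real_inner_smul_right,
    real_inner_comm (e a)]
  ring

theorem sum_curvOp_knProd_self (H : V →ₗ[ℝ] V) (X : V) :
    ∑ j, curvOp e (knProd (fun X Y => ⟪H X, Y⟫) gf) X (e j) (e j) =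
      (2 - n : ℝ) • H X - H.trace ℝ V • X := by
  have expand_HX : ∑ j, ⟪H X, e j⟫ • e j = H X := sum_inner_smul_map e LinearMap.id (H X)
  simp only [curvOp_knProd, Finset.sum_add_distrib, Finset.sum_sub_distrib, ← Finset.sum_smul,
    expand_HX, sum_inner_smul_map e H X, sum_inner_map_self_eq_trace,
    real_inner_self_eq_norm_sq, e.norm_eq_one, one_pow, Finset.sum_const, Finset.card_univ,
    Fintype.card_fin, nsmul_eq_mul, mul_one]
  module

theorem sum_bilin_curvOp_knProd (H : V → V) (B : LinearMap.BilinForm ℝ V) (X Y : V) :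
    ∑ j, B (e j) (curvOp e (knProd (fun X Y => ⟪H X, Y⟫) gf) X (e j) Y) =
      (∑ j, B (e j) (e j)) * ⟪H X, Y⟫ - B Y (H X) + (∑ j, B (e j) (H (e j))) * ⟪X, Y⟫ -
        ∑ j, ⟪H (e j), Y⟫ * B (e j) X := by
  have expand_Y : ∑ j, ⟪e j, Y⟫ * B (e j) (H X) = B Y (H X) := by
    simpa only [real_inner_comm] using! sum_inner_smul_map e (B.flip (H X)) Y
  simp only [curvOp_knProd, map_add, map_sub, map_smul, smul_eq_mul, Finset.sum_add_distrib,
    Finset.sum_sub_distrib, ← Finset.mul_sum, expand_Y]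
  ring

theorem ricSlot_knProd (H : V →ₗ[ℝ] V) (T : MultilinearMap ℝ (fun _ : Fin 2 => V) ℝ)
    (X Y : V) :
    ricSlot e (knProd (fun X Y => ⟪H X, Y⟫) gf) T X Y =
      (n - 2) * T ![H X, Y] + T ![Y, H X] + ∑ j, ⟪H (e j), Y⟫ * T ![e j, X] +
        H.trace ℝ V * T ![X, Y] - (∑ j, T ![e j, e j]) * ⟪H X, Y⟫ -
        (∑ j, T ![e j, H (e j)]) * ⟪X, Y⟫ := by
  have first_slot := congrArg (fun Z => toBilinForm T Z Y) (sum_curvOp_knProd_self e H X)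
  have second_slot := sum_bilin_curvOp_knProd e H (toBilinForm T) X Y
  simp only [map_sum, map_sub, map_smul, LinearMap.sum_apply, LinearMap.sub_apply,
    LinearMap.smul_apply, smul_eq_mul, toBilinForm_apply] at first_slot second_slot
  simp only [ricSlot, tact_pair, Finset.sum_neg_distrib, Finset.sum_add_distrib, first_slot,
    second_slot]
  ring

theorem sum_sum_inner_mul (L : V → V) (T : MultilinearMap ℝ (fun _ : Fin 2 => V) ℝ) :
    ∑ a, ∑ b, ⟪L (e a), e b⟫ * T ![e a, e b] = ∑ a, T ![e a, L (e a)] :=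
  Finset.sum_congr rfl fun a _ => sum_inner_smul_map e (toBilinForm T (e a)) (L (e a))

-- The inner sum is `T(L* e_b, e_a)`, where `L*` is the adjoint of `L`; both sides are the trace
-- of `L` composed with the square of the symmetric endomorphism representing `T`.
theorem sum_sum_adjoint_mul_of_symm (L : V → V) (T : MultilinearMap ℝ (fun _ : Fin 2 => V) ℝ)
    (hT : ∀ X Y, T ![X, Y] = T ![Y, X]) :
    ∑ a, ∑ b, (∑ j, ⟪L (e j), e b⟫ * T ![e j, e a]) * T ![e a, e b] =
      ∑ a, ∑ b, T ![L (e a), e b] * T ![e a, e b] := by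
  have expand (a j : Fin n) : ∑ b, ⟪L (e j), e b⟫ * T ![e a, e b] = T ![L (e j), e a] := by
    rw [hT (L (e j))]
    exact sum_inner_smul_map e (toBilinForm T (e a)) (L (e j))
  calc
    _ = ∑ a, ∑ j, T ![e j, e a] * ∑ b, ⟪L (e j), e b⟫ * T ![e a, e b] := by
      refine Finset.sum_congr rfl fun a _ => ?_
      simp only [Finset.sum_mul, Finset.mul_sum]
      rw [Finset.sum_comm]
      exact Finset.sum_congr rfl fun j _ => Finset.sum_congr rfl fun b _ => by ring
    _ = ∑ j, ∑ a, T ![L (e j), e a] * T ![e j, e a] := by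
      rw [Finset.sum_comm]
      simp only [expand, mul_comm]

theorem tinner_ricTerm_knProd (H : V →ₗ[ℝ] V) (T : MultilinearMap ℝ (fun _ : Fin 2 => V) ℝ)
    (hT : ∀ X Y, T ![X, Y] = T ![Y, X]) :
    tinner e (ricTerm e (knProd (fun X Y => ⟪H X, Y⟫) gf) T) T =
      -n * tinner e (tact H T) T + 2 * H.trace ℝ V * tinner e T T -
        4 * (∑ a, T ![e a, e a]) * ∑ a, T ![e a, H (e a)] := by
  have slot_expansion (X Y : V) : ricSlot e (knProd (fun X Y => ⟪H X, Y⟫) gf) T X Y =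
      (n - 1) * T ![H X, Y] + ∑ j, ⟪H (e j), Y⟫ * T ![e j, X] + H.trace ℝ V * T ![X, Y] -
        (∑ j, T ![e j, e j]) * ⟪H X, Y⟫ - (∑ j, T ![e j, H (e j)]) * ⟪X, Y⟫ := by
    rw [ricSlot_knProd, hT Y]
    ring
  have inner_g : ∑ a, ∑ b, ⟪e a, e b⟫ * T ![e a, e b] = ∑ a, T ![e a, e a] :=
    sum_sum_inner_mul e id T
  rw [tinner_eq_two_mul_sum_of_symm _ _ _ _ (ricTerm_pair_of_symm e _ T hT) hT,
    tinner_tact_of_symm e H T hT, tinner_eq_sum_pair]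
  simp only [slot_expansion, add_mul _ _ (T _), sub_mul _ _ (T _), Finset.sum_add_distrib,
    Finset.sum_sub_distrib, sum_sum_adjoint_mul_of_symm e H T hT, mul_assoc,
    ← Finset.mul_sum, sum_sum_inner_mul, inner_g]
  ring

end KulkarniNomizu

theorem stmt18_general {n : ℕ} (hn : 1 ≤ n) (e : OrthonormalBasis (Fin n) ℝ V)
    (S : V →ₗ[ℝ] V) (h : V → V → ℝ)
    (hh : ∀ X Y : V, h X Y =
      (1 / (n : ℝ)) * ⟪S X, Y⟫ -
        ((∑ a : Fin n, ⟪S (e a), e a⟫) / (2 * (n : ℝ) ^ 2)) * ⟪X, Y⟫)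
    (T : MultilinearMap ℝ (fun _ : Fin 2 => V) ℝ)
    (hTsym : ∀ X Y : V, T ![X, Y] = T ![Y, X])
    (hTtf : (∑ a : Fin n, T ![e a, e a]) = 0) :
    tinner ⇑e (ricTerm ⇑e (knProd h gf) ⇑T) ⇑T = -(tinner ⇑e (tact ⇑S ⇑T) ⇑T) := by
  have hn0 : (n : ℝ) ≠ 0 := by positivity
  set H : V →ₗ[ℝ] V :=
    (1 / n : ℝ) • S - (S.trace ℝ V / (2 * n ^ 2)) • LinearMap.id with hH
  have h_eq : h = fun X Y => ⟪H X, Y⟫ := by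
    ext X Y
    simp only [hh, sum_inner_map_self_eq_trace, hH, LinearMap.sub_apply, LinearMap.smul_apply,
      LinearMap.id_apply, inner_sub_left, real_inner_smul_left]
  have trace_H : H.trace ℝ V = S.trace ℝ V / (2 * n) := by
    have := e.toBasis.finiteDimensional_of_finite
    rw [hH, map_sub, map_smul, map_smul, LinearMap.trace_id,
      Module.finrank_eq_card_basis e.toBasis, Fintype.card_fin, smul_eq_mul, smul_eq_mul]
    field_simp
    ring
  rw [h_eq, tinner_ricTerm_knProd e H T hTsym, hTtf, trace_H, hH, tinner_tact_smul_sub_smul_id]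
  field_simp
  ring

/-- with `h = (1/n) s − (tr S / (2n²)) g`, every trace-free symmetric
`(0,2)`-tensor satisfies `⟨Ric_{h⧆g}(T), T⟩ = −⟨ST, T⟩`. -/
theorem stmt18 {n : ℕ} (hn : 1 ≤ n)
    (e : OrthonormalBasis (Fin n) ℝ V)
    (S : V →ₗ[ℝ] V) (hSsym : ∀ X Y : V, ⟪S X, Y⟫ = ⟪X, S Y⟫)
    (s : V → V → ℝ) (hs : ∀ X Y : V, s X Y = ⟪S X, Y⟫)
    (h : V → V → ℝ)
    (hh : ∀ X Y : V, h X Y =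
      (1 / (n : ℝ)) * s X Y -
        ((∑ a : Fin n, ⟪S (e a), e a⟫) / (2 * (n : ℝ) ^ 2)) * ⟪X, Y⟫)
    (T : MultilinearMap ℝ (fun _ : Fin 2 => V) ℝ)
    (hTsym : ∀ X Y : V, T ![X, Y] = T ![Y, X])
    (hTtf : (∑ a : Fin n, T ![e a, e a]) = 0) :
    tinner ⇑e (ricTerm ⇑e (knProd h gf) ⇑T) ⇑T = -(tinner ⇑e (tact ⇑S ⇑T) ⇑T) :=
  stmt18_general hn e S h (fun X Y => by rw [hh, hs]) T hTsym hTtf
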